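/- Let A be a Hopf algebra over an algebraically closed field k with bijective antipode, and let R be a left or right A-Galois object. If A is homologically smooth, then cd(A) = cd(R). -/

import Mathlib

open TensorProduct CategoryTheory

universe u

namespace QuesProj

/-! ## Projective dimension via Ext -/

/-- The projective dimension of an object of an abelian category with enough projectives:
the supremum of the degrees in which some `Ext` group out of it is nonzero. -/
noncomputable def extPD {C : Type (u+1)} [Category.{u} C] [Abelian C] [EnoughProjectives C]
    (V : C) : ℕ∞ :=
  sSup {n : ℕ∞ | ∃ m : ℕ, n = (m : ℕ∞) ∧
    ∃ W : C, Nontrivial (((Ext ℤ C m).obj (Opposite.op V)).obj W)}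

/-! ## Comodules, comodule algebras and Hopf-Galois objects -/

section Coaction

variable (k : Type u) [Field k]
variable (A : Type u) [AddCommGroup A] [Module k A] [Coalgebra k A]
variable (V : Type u) [AddCommGroup V] [Module k V]

/-- A right `A`-comodule structure on `V`. -/
structure RightCoaction where
  ρ : V →ₗ[k] V ⊗[k] A
  coassoc : (TensorProduct.assoc k V A A).toLinearMap ∘ₗ ρ.rTensor A ∘ₗ ρ
      = (Coalgebra.comul (R := k) (A := A)).lTensor V ∘ₗ ρ
  counit_comp : (TensorProduct.rid k V).toLinearMap ∘ₗ
      (Coalgebra.counit (R := k) (A := A)).lTensor V ∘ₗ ρ = LinearMap.id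

variable {k A V}

/-- A linear map between right comodules is colinear. -/
def IsColinear {W : Type u} [AddCommGroup W] [Module k W]
    (coV : RightCoaction k A V) (coW : RightCoaction k A W) (f : V →ₗ[k] W) : Prop :=
  coW.ρ ∘ₗ f = f.rTensor A ∘ₗ coV.ρ

end Coaction

section ComodAlg

variable (k : Type u) [Field k]
variable (A : Type u) [Ring A] [Bialgebra k A]
variable (R : Type u) [Ring R] [Algebra k R]

/-- A right `A`-comodule algebra structure on `R`. -/
structure RightComodAlg where
  ρ : R →ₗ[k] R ⊗[k] A
  coassoc : (TensorProduct.assoc k R A A).toLinearMap ∘ₗ ρ.rTensor A ∘ₗ ρ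
      = (Coalgebra.comul (R := k) (A := A)).lTensor R ∘ₗ ρ
  counit_comp : (TensorProduct.rid k R).toLinearMap ∘ₗ
      (Coalgebra.counit (R := k) (A := A)).lTensor R ∘ₗ ρ = LinearMap.id
  map_one : ρ 1 = 1
  map_mul : ∀ x y : R, ρ (x * y) = ρ x * ρ y

/-- A left `A`-comodule algebra structure on `R`. -/
structure LeftComodAlg where
  lam : R →ₗ[k] A ⊗[k] R
  coassoc : (TensorProduct.assoc k A A R).toLinearMap ∘ₗ
      (Coalgebra.comul (R := k) (A := A)).rTensor R ∘ₗ lam = lam.lTensor A ∘ₗ lam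
  counit_comp : (TensorProduct.lid k R).toLinearMap ∘ₗ
      (Coalgebra.counit (R := k) (A := A)).rTensor R ∘ₗ lam = LinearMap.id
  map_one : lam 1 = 1
  map_mul : ∀ x y : R, lam (x * y) = lam x * lam y

variable {k A R}

/-- The coaction of a right comodule algebra, as a `RightCoaction`. -/
def RightComodAlg.toCoaction (c : RightComodAlg k A R) : RightCoaction k A R :=
  ⟨c.ρ, c.coassoc, c.counit_comp⟩

/-- The canonical (Galois) map `R ⊗ R → A ⊗ R` of a left comodule algebra,
`x ⊗ y ↦ x₍₋₁₎ ⊗ x₍₀₎y`. -/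
noncomputable def LeftComodAlg.can (c : LeftComodAlg k A R) : R ⊗[k] R →ₗ[k] A ⊗[k] R :=
  (LinearMap.mul' k R).lTensor A ∘ₗ (TensorProduct.assoc k A R R).toLinearMap ∘ₗ
    c.lam.rTensor R

/-- The canonical (Galois) map `R ⊗ R → R ⊗ A` of a right comodule algebra,
`x ⊗ y ↦ xy₍₀₎ ⊗ y₍₁₎`. -/
noncomputable def RightComodAlg.can (c : RightComodAlg k A R) : R ⊗[k] R →ₗ[k] R ⊗[k] A :=
  (LinearMap.mul' k R).rTensor A ∘ₗ (TensorProduct.assoc k R R A).symm.toLinearMap ∘ₗ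
    c.ρ.lTensor R

/-- `R` is a left `A`-Galois object via the left comodule algebra structure `c`:
it is nonzero and the canonical map is bijective. -/
def LeftComodAlg.IsGalois (c : LeftComodAlg k A R) : Prop :=
  Nontrivial R ∧ Function.Bijective c.can

/-- `R` is a right `A`-Galois object via the right comodule algebra structure `c`. -/
def RightComodAlg.IsGalois (c : RightComodAlg k A R) : Prop :=
  Nontrivial R ∧ Function.Bijective c.can

/-- `R` is a left or right `A`-Galois object. -/
def IsGaloisObject (k A R : Type u) [Field k] [Ring A] [Bialgebra k A] [Ring R]
    [Algebra k R] : Prop :=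
  (∃ c : LeftComodAlg k A R, c.IsGalois) ∨ (∃ c : RightComodAlg k A R, c.IsGalois)

end ComodAlg

/-! ## Trivial module, cohomological dimensions, smoothness -/

section Trivial

variable (k : Type u) [Field k] (A : Type u) [Ring A] [Bialgebra k A]

/-- The trivial module of a bialgebra: the base field with action through the counit. -/
def TrivialModule (_A : Type u) : Type u := k

instance : AddCommGroup (TrivialModule k A) := inferInstanceAs (AddCommGroup k)

noncomputable instance : Module A (TrivialModule k A) :=
  Module.compHom k (Bialgebra.counitAlgHom k A).toRingHom

/-- The cohomological dimension of a Hopf algebra: the projective dimension of the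
trivial module. -/
noncomputable def cdHopf : ℕ∞ := extPD (ModuleCat.of A (TrivialModule k A))

end Trivial

section Bimodule

attribute [local instance] TensorProduct.Algebra.module

variable (k : Type u) [Field k] (R : Type u) [Ring R] [Algebra k R]

/-- `k`-scalars commute appropriately with the enveloping algebra action. -/
noncomputable def envTower : IsScalarTower k (R ⊗[k] Rᵐᵒᵖ) R := by
  constructor
  intro c e v
  show TensorProduct.Algebra.moduleAux (c • e) v = c • TensorProduct.Algebra.moduleAux e v
  rw [map_smul]
  rfl

attribute [local instance] envTower

/-- The Hochschild cohomological dimension of a `k`-algebra `R`: the projective dimension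
of `R` in the category of `R`-bimodules, i.e. of modules over `R ⊗ Rᵐᵒᵖ`. -/
noncomputable def cdAlg : ℕ∞ := extPD (ModuleCat.of (R ⊗[k] Rᵐᵒᵖ) R)

/-- `FgProjDimLE S n M` says that the `S`-module `M` admits a resolution
`0 → P_n → ⋯ → P_0 → M → 0` by finitely generated projective `S`-modules. -/
def FgProjDimLE (S : Type u) [Ring S] :
    ℕ → (M : Type u) → [AddCommGroup M] → [Module S M] → Prop
  | 0, M, _, _ => Module.Finite S M ∧ Module.Projective S M
  | (n+1), M, _, _ => ∃ (P : Type u) (_ : AddCommGroup P) (_ : Module S P) (φ : P →ₗ[S] M),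
      Module.Finite S P ∧ Module.Projective S P ∧ Function.Surjective φ ∧
        FgProjDimLE S n (LinearMap.ker φ)

/-- A `k`-algebra `R` is homologically smooth if `R` admits a finite resolution by finitely
generated projective `R`-bimodules. -/
def IsHomSmooth : Prop :=
  ∃ n : ℕ, FgProjDimLE (R ⊗[k] Rᵐᵒᵖ) n R

end Bimodule


/-! ## The trivial coaction and tensor product coactions -/

section UnitTensor

variable (k : Type u) [Field k] (A : Type u) [Ring A] [Bialgebra k A]

/-- The coaction on the monoidal unit `k`. -/
noncomputable def unitCoactMap : k →ₗ[k] k ⊗[k] A :=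
  (Algebra.linearMap k A).lTensor k ∘ₗ (TensorProduct.lid k k).symm.toLinearMap

/-- The trivial right coaction on `k`. -/
noncomputable def unitCoaction : RightCoaction k A k where
  ρ := unitCoactMap k A
  coassoc := by
    unfold unitCoactMap
    apply LinearMap.ext_ring
    simp [Bialgebra.comul_one, Algebra.TensorProduct.one_def]
  counit_comp := by
    unfold unitCoactMap
    apply LinearMap.ext_ring
    simp [Bialgebra.counit_one]

variable {k A}

/-- The canonical coaction on the tensor product of two comodules. -/
noncomputable def tensorCoactMap {V W : Type u} [AddCommGroup V] [Module k V]
    [AddCommGroup W] [Module k W] (ρV : V →ₗ[k] V ⊗[k] A) (ρW : W →ₗ[k] W ⊗[k] A) :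
    V ⊗[k] W →ₗ[k] (V ⊗[k] W) ⊗[k] A :=
  (LinearMap.mul' k A).lTensor (V ⊗[k] W) ∘ₗ
    (TensorProduct.tensorTensorTensorComm k V A W A).toLinearMap ∘ₗ TensorProduct.map ρV ρW

end UnitTensor

/-! ## Haar integrals, modular functionals and averaging -/


section Haar

variable {k : Type u} [Field k] {A : Type u} [Ring A] [HopfAlgebra k A]

/-- Convolution product of two linear functionals on a coalgebra. -/
noncomputable def convF (ψ φ : A →ₗ[k] k) : A →ₗ[k] k :=
  LinearMap.mul' k k ∘ₗ TensorProduct.map ψ φ ∘ₗ Coalgebra.comul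

/-- Convolution `ψ ∗ g` of a functional with a linear endomap. -/
noncomputable def convL (ψ : A →ₗ[k] k) (g : A →ₗ[k] A) : A →ₗ[k] A :=
  (TensorProduct.lid k A).toLinearMap ∘ₗ TensorProduct.map ψ g ∘ₗ Coalgebra.comul

/-- Convolution `g ∗ ψ` of a linear endomap with a functional. -/
noncomputable def convR (g : A →ₗ[k] A) (ψ : A →ₗ[k] k) : A →ₗ[k] A :=
  (TensorProduct.rid k A).toLinearMap ∘ₗ TensorProduct.map g ψ ∘ₗ Coalgebra.comul

/-- `h : A → k` is a Haar integral: `h(a₍₁₎)a₍₂₎ = h(a)1 = h(a₍₂₎)a₍₁₎` and `h(1) = 1`. -/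
structure IsHaar (h : A →ₗ[k] k) : Prop where
  left_inv : (TensorProduct.lid k A).toLinearMap ∘ₗ h.rTensor A ∘ₗ
      (Coalgebra.comul (R := k) (A := A)) = Algebra.linearMap k A ∘ₗ h
  right_inv : (TensorProduct.rid k A).toLinearMap ∘ₗ h.lTensor A ∘ₗ
      (Coalgebra.comul (R := k) (A := A)) = Algebra.linearMap k A ∘ₗ h
  map_one : h 1 = 1

/-- A Hopf algebra is cosemisimple iff it admits a Haar integral. -/
def IsCosemisimple (k : Type u) [Field k] (A : Type u) [Ring A] [HopfAlgebra k A] : Prop :=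
  ∃ h : A →ₗ[k] k, IsHaar h

/-- The modular automorphism `σ = ψ ∗ id ∗ ψ` associated to a functional `ψ`. -/
noncomputable def sigmaOf (ψ : A →ₗ[k] k) : A →ₗ[k] A := convL ψ (convR LinearMap.id ψ)

/-- A modular functional on a cosemisimple Hopf algebra with Haar integral `h`:
a convolution invertible functional `ψ` with `S² = ψ ∗ id ∗ ψ⁻¹`, such that
`σ = ψ ∗ id ∗ ψ` is an algebra automorphism and `h(ab) = h(b σ(a))`. -/
structure ModularFunctional (h : A →ₗ[k] k) : Type u where
  ψ : A →ₗ[k] k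
  ψinv : A →ₗ[k] k
  inv_left : convF ψ ψinv = Coalgebra.counit
  inv_right : convF ψinv ψ = Coalgebra.counit
  antipode_sq : (HopfAlgebra.antipode (R := k) (A := A)) ∘ₗ HopfAlgebra.antipode (R := k) (A := A)
      = convL ψ (convR LinearMap.id ψinv)
  sigma_one : sigmaOf ψ 1 = 1
  sigma_mul : ∀ a b : A, sigmaOf ψ (a * b) = sigmaOf ψ a * sigmaOf ψ b
  sigma_bijective : Function.Bijective (sigmaOf ψ)
  kms : ∀ a b : A, h (a * b) = h (b * sigmaOf ψ a)

variable {V W : Type u} [AddCommGroup V] [Module k V] [AddCommGroup W] [Module k W]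

/-- The averaging of a linear map `f : V → W` between right `A`-comodules with respect to
a linear functional `h` on `A`: `v ↦ h(f(v₍₀₎)₍₁₎ S(v₍₁₎)) f(v₍₀₎)₍₀₎`. -/
noncomputable def avg (ρV : V →ₗ[k] V ⊗[k] A) (ρW : W →ₗ[k] W ⊗[k] A)
    (h : A →ₗ[k] k) (f : V →ₗ[k] W) : V →ₗ[k] W :=
  (TensorProduct.rid k W).toLinearMap ∘ₗ h.lTensor W ∘ₗ (LinearMap.mul' k A).lTensor W ∘ₗ
    (TensorProduct.assoc k W A A).toLinearMap ∘ₗ ρW.rTensor A ∘ₗ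
      (HopfAlgebra.antipode (R := k) (A := A)).lTensor W ∘ₗ f.rTensor A ∘ₗ ρV

/-- The twist `ρ = id ∗ ψ⁻²` of a right comodule (algebra), `x ↦ ψ⁻²(x₍₁₎)x₍₀₎`. -/
noncomputable def comodTwist (φ : A →ₗ[k] k) (ρV : V →ₗ[k] V ⊗[k] A) : V →ₗ[k] V :=
  (TensorProduct.rid k V).toLinearMap ∘ₗ φ.lTensor V ∘ₗ ρV

/-- The twist `θ = ψ² ∗ id : A → A`. -/
noncomputable def thetaOf (φ : A →ₗ[k] k) : A →ₗ[k] A := convL φ LinearMap.id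

end Haar


end QuesProj

/-!
A left Galois object `R` has a translation map, an algebra homomorphism
`a ↦ can⁻¹(a ⊗ 1)` from `A` to the enveloping algebra `R ⊗ Rᵐᵒᵖ`. Restriction along it has the
exact left adjoint `X ↦ X ⊗ R`, which sends the trivial module to the bimodule `R`; hence
`Ext(R, M) = Ext(k, M)` for every bimodule `M`, and `cd(R) ≤ cd(A)`.

For the converse, averaging over the comodule structure of `R ⊗ Rᵐᵒᵖ` makes the translation map a
split injection of `A`-modules, so that every `A`-module `W` is a quotient of a restricted bimodule.
If `n = cd(A)` is finite then `Ext^n(k, -)` is right exact, so `Ext^n(k, W) ≠ 0` for some restricted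
bimodule `W`, and `cd(A) ≤ cd(R)`. For `R = A` the translation map `a ↦ a₍₁₎ ⊗ S(a₍₂₎)` even has the
algebra retraction `x ⊗ y ↦ ε(y)x`, so that all modules are restricted and `cd(A)` equals the
Hochschild dimension of `A` unconditionally. Smoothness therefore makes `cd(A)` finite.

If `R` is right Galois, then `Rᵐᵒᵖ` is left Galois over `A` with opposite multiplication and
comultiplication, which has the same dimension because Hochschild dimensions are invariant under
passing to the opposite algebra.
-/

universe v

namespace QuesProj

open CategoryTheory.Limits

section ExtVanishing

variable {C : Type v} [Category.{u} C] [Abelian C]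

/-- The degree `n` cohomology of the complex `Hom(P, Y)` vanishes. -/
def CocyclesAreCoboundaries {X : C} (P : ProjectiveResolution X) (Y : C) (n : ℕ) : Prop :=
  ∀ f : P.complex.X n ⟶ Y, P.complex.d (n + 1) n ≫ f = 0 →
    ∃ g : P.complex.X ((ComplexShape.down ℕ).next n) ⟶ Y, P.complex.d n _ ≫ g = f

lemma subsingleton_extFunctor_iff [EnoughProjectives C] {X : C} (P : ProjectiveResolution X)
    (Y : C) (n : ℕ) :
    Subsingleton (((Ext ℤ C n).obj (Opposite.op X)).obj Y) ↔ CocyclesAreCoboundaries P Y n := by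
  rw [← ModuleCat.isZero_iff_subsingleton, (P.isoExt n Y).isZero_iff,
    ← HomologicalComplex.exactAt_iff_isZero_homology,
    HomologicalComplex.exactAt_iff' _ ((ComplexShape.down ℕ).next n) n (n + 1)
      (by cases n <;> simp) (by simp),
    ShortComplex.moduleCat_exact_iff]
  rfl

lemma subsingleton_abelianExt_iff [HasExt.{u} C] {X : C} (P : ProjectiveResolution X) (Y : C)
    (n : ℕ) : Subsingleton (Abelian.Ext.{u} X Y n) ↔ CocyclesAreCoboundaries P Y n := by
  cases n with
  | zero =>
    refine ⟨fun _ f hf => ⟨0, ?_⟩, fun h => subsingleton_of_forall_eq 0 fun α => ?_⟩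
    · have hom_eq_zero (g : X ⟶ Y) : g = 0 :=
        Abelian.Ext.homEquiv₀.symm.injective (Subsingleton.elim _ _)
      rw [← P.exact₀.g_desc f hf, comp_zero]
      exact (congrArg _ (hom_eq_zero _)).trans comp_zero |>.symm
    · obtain ⟨f, hf, rfl⟩ := P.extMk_surjective α 1 rfl
      obtain ⟨g, rfl⟩ := h f hf
      simp
  | succ p =>
    have next_eq : (ComplexShape.down ℕ).next (p + 1) = p := by simp
    rw [CocyclesAreCoboundaries, next_eq]
    refine ⟨fun _ f hf => ?_, fun h => subsingleton_of_forall_eq 0 fun α => ?_⟩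
    · exact (P.extMk_eq_zero_iff f (p + 2) rfl hf p rfl).1 (Subsingleton.elim _ _)
    · obtain ⟨f, hf, rfl⟩ := P.extMk_surjective α (p + 2) rfl
      exact (P.extMk_eq_zero_iff f (p + 2) rfl hf p rfl).2 (h f hf)

lemma subsingleton_ext_iff_of_adjunction {D : Type*} [Category.{u} D] [Abelian D]
    [EnoughProjectives C] [HasExt.{u} C] [HasExt.{u} D] {L : C ⥤ D} {G : D ⥤ C} (adj : L ⊣ G)
    [L.Additive] [L.PreservesHomology] [G.PreservesEpimorphisms] (X : C) (M : D) (n : ℕ) :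
    Subsingleton (Abelian.Ext.{u} (L.obj X) M n) ↔
      Subsingleton (Abelian.Ext.{u} X (G.obj M) n) := by
  have : L.IsLeftAdjoint := ⟨_, ⟨adj⟩⟩
  have : L.PreservesProjectiveObjects := ⟨fun {X} hX => adj.map_projective X hX⟩
  have : G.Additive := adj.right_adjoint_additive
  let P := projectiveResolution X
  rw [subsingleton_abelianExt_iff P, subsingleton_abelianExt_iff (L.mapProjectiveResolution P)]
  change (∀ f : L.obj (P.complex.X n) ⟶ M, L.map (P.complex.d (n + 1) n) ≫ f = 0 →
    ∃ g : L.obj (P.complex.X ((ComplexShape.down ℕ).next n)) ⟶ M,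
      L.map (P.complex.d n _) ≫ g = f) ↔ _
  constructor
  · intro h f hf
    obtain ⟨g, hg⟩ := h ((adj.homEquiv _ _).symm f) (by
      rw [← adj.homEquiv_naturality_left_symm, hf, adj.homEquiv_counit, L.map_zero, zero_comp])
    refine ⟨adj.homEquiv _ _ g, ?_⟩
    rw [← adj.homEquiv_naturality_left, hg, Equiv.apply_symm_apply]
  · intro h f hf
    obtain ⟨g, hg⟩ := h (adj.homEquiv _ _ f) (by
      rw [← adj.homEquiv_naturality_left, hf, adj.homEquiv_unit, G.map_zero, comp_zero])
    refine ⟨(adj.homEquiv _ _).symm g, ?_⟩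
    rw [← adj.homEquiv_naturality_left_symm, hg, Equiv.symm_apply_apply]

lemma subsingleton_ext_of_retract [HasExt.{u} C] {X Y Z : C} (h : Retract Y Z) {n : ℕ}
    [Subsingleton (Abelian.Ext.{u} X Z n)] : Subsingleton (Abelian.Ext.{u} X Y n) := by
  refine subsingleton_of_forall_eq 0 fun α => ?_
  have factor : (α.comp (Abelian.Ext.mk₀ h.i) (add_zero n)).comp (Abelian.Ext.mk₀ h.r)
      (add_zero n) = α := by simp
  rw [← factor, Subsingleton.elim (α.comp _ _) 0, Abelian.Ext.zero_comp]

end ExtVanishing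

section ProjectiveDimension

variable {C D : Type (u + 1)} [Category.{u} C] [Category.{u} D] [Abelian C] [Abelian D]

lemma extPD_le_iff [EnoughProjectives C] {X : C} {n : ℕ} :
    extPD X ≤ n ↔ HasProjectiveDimensionLE X n := by
  have := hasExt_of_enoughProjectives.{u} C
  have nontrivial_iff (m : ℕ) (W : C) : Nontrivial (((Ext ℤ C m).obj (Opposite.op X)).obj W) ↔
      ¬ Subsingleton (Abelian.Ext.{u} X W m) := by
    rw [← not_subsingleton_iff_nontrivial, subsingleton_extFunctor_iff (projectiveResolution X),
      subsingleton_abelianExt_iff (projectiveResolution X)]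
  simp only [extPD, sSup_le_iff, Set.mem_ofPred_eq, forall_exists_index, and_imp,
    nontrivial_iff, hasProjectiveDimensionLT_iff.{u}]
  refine ⟨fun h i hi Y e => ?_, ?_⟩
  · by_contra he
    have : i ≤ n := by
      exact_mod_cast h i i rfl Y fun _ => he (Subsingleton.elim _ _)
    lia
  · rintro h _ i rfl Y hY
    by_contra hi
    rw [Nat.cast_le] at hi
    exact hY (subsingleton_of_forall_eq 0 fun e => h i (by lia) e)

variable [EnoughProjectives C] [EnoughProjectives D]

lemma extPD_le_extPD {X : C} {Y : D}
    (h : ∀ n : ℕ, HasProjectiveDimensionLE Y n → HasProjectiveDimensionLE X n) :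
    extPD X ≤ extPD Y := by
  rcases eq_or_ne (extPD Y) ⊤ with hY | hY
  · exact le_top.trans_eq hY.symm
  · obtain ⟨n, hn⟩ := ENat.ne_top_iff_exists.1 hY
    exact hn ▸ extPD_le_iff.2 (h n (extPD_le_iff.1 hn.ge))

lemma extPD_eq_of_iso {X Y : C} (e : X ≅ Y) : extPD X = extPD Y :=
  le_antisymm (extPD_le_extPD fun n _ => hasProjectiveDimensionLT_of_iso e.symm (n + 1))
    (extPD_le_extPD fun n _ => hasProjectiveDimensionLT_of_iso e (n + 1))

section Adjunction

variable {L : C ⥤ D} {G : D ⥤ C} [L.Additive] [L.PreservesHomology] [G.PreservesEpimorphisms]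

lemma extPD_leftAdjoint_obj_le (adj : L ⊣ G) (X : C) : extPD (L.obj X) ≤ extPD X := by
  have := hasExt_of_enoughProjectives.{u} C
  have := hasExt_of_enoughProjectives.{u} D
  refine extPD_le_extPD fun n _ => .mk fun i hi M e => ?_
  have : Subsingleton (Abelian.Ext.{u} X (G.obj M) i) :=
    HasProjectiveDimensionLT.subsingleton X (n + 1) i hi _
  exact ((subsingleton_ext_iff_of_adjunction adj X M i).2 this).elim _ _

lemma extPD_leftAdjoint_obj_of_retract (adj : L ⊣ G)
    (hG : ∀ W, ∃ N, Nonempty (Retract W (G.obj N))) (X : C) : extPD (L.obj X) = extPD X := by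
  have := hasExt_of_enoughProjectives.{u} C
  have := hasExt_of_enoughProjectives.{u} D
  refine (extPD_leftAdjoint_obj_le adj X).antisymm <|
    extPD_le_extPD fun n _ => .mk fun i hi W e => ?_
  obtain ⟨N, ⟨r⟩⟩ := hG W
  have : Subsingleton (Abelian.Ext.{u} X (G.obj N) i) :=
    (subsingleton_ext_iff_of_adjunction adj X N i).1 <|
      HasProjectiveDimensionLT.subsingleton (L.obj X) (n + 1) i hi N
  exact (subsingleton_ext_of_retract r).elim _ _

lemma hasProjectiveDimensionLT_of_leftAdjoint_obj (adj : L ⊣ G)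
    (hG : ∀ W, ∃ (N : D) (p : G.obj N ⟶ W), Epi p) {X : C} {n m : ℕ}
    [HasProjectiveDimensionLT (L.obj X) n] (hX : HasProjectiveDimensionLT X (n + m)) :
    HasProjectiveDimensionLT X n := by
  have := hasExt_of_enoughProjectives.{u} C
  have := hasExt_of_enoughProjectives.{u} D
  induction m with
  | zero => exact hX
  | succ m ih =>
    refine ih (.mk fun i hi W e => ?_)
    obtain ⟨N, p, _⟩ := hG W
    have hS : (ShortComplex.mk (kernel.ι p) p (kernel.condition p)).ShortExact :=
      { exact := ShortComplex.exact_kernel p }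
    have : Subsingleton (Abelian.Ext.{u} X (G.obj N) i) :=
      (subsingleton_ext_iff_of_adjunction adj X N i).1 <|
        HasProjectiveDimensionLT.subsingleton (L.obj X) n i (by lia) N
    obtain ⟨e', rfl⟩ := Abelian.Ext.covariant_sequence_exact₃ X hS e rfl
      (Abelian.Ext.eq_zero_of_hasProjectiveDimensionLT _ (n + (m + 1)) (by lia))
    rw [Subsingleton.elim e' 0, Abelian.Ext.zero_comp]

lemma extPD_leftAdjoint_obj_of_epi (adj : L ⊣ G)
    (hG : ∀ W, ∃ (N : D) (p : G.obj N ⟶ W), Epi p) {X : C} (hX : extPD X ≠ ⊤) :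
    extPD (L.obj X) = extPD X := by
  refine (extPD_leftAdjoint_obj_le adj X).antisymm (extPD_le_extPD fun n _ => ?_)
  obtain ⟨m, hm⟩ := ENat.ne_top_iff_exists.1 hX
  have : HasProjectiveDimensionLE X m := extPD_le_iff.1 hm.ge
  exact hasProjectiveDimensionLT_of_leftAdjoint_obj adj hG (m := m)
    (hasProjectiveDimensionLT_of_ge X (m + 1) _ (by lia))

end Adjunction

lemma extPD_equivalence_functor_obj (E : C ≌ D) [E.functor.Additive] (X : C) :
    extPD (E.functor.obj X) = extPD X :=
  extPD_leftAdjoint_obj_of_retract E.toAdjunction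
    (fun W => ⟨E.functor.obj W, ⟨(E.unitIso.app W).retract⟩⟩) X

end ProjectiveDimension

section FiniteResolutions

variable {S : Type u} [Ring S]

lemma FgProjDimLE.hasProjectiveDimensionLE {n : ℕ} {M : Type u} [AddCommGroup M] [Module S M]
    (h : FgProjDimLE S n M) : HasProjectiveDimensionLE (ModuleCat.of S M) n := by
  induction n generalizing M with
  | zero =>
    obtain ⟨-, hM⟩ := h
    have := (IsProjective.iff_projective M).1 hM
    infer_instance
  | succ n ih =>
    obtain ⟨P, _, _, φ, -, hP, hφ, hK⟩ := h
    have := (IsProjective.iff_projective P).1 hP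
    exact (LinearMap.shortExact_shortComplexKer hφ).hasProjectiveDimensionLT_X₃ (n + 1)
      (ih hK) (hasProjectiveDimensionLT_of_ge _ 1 _ (by lia))

attribute [local instance] TensorProduct.Algebra.module in
lemma IsHomSmooth.cdAlg_ne_top {k R : Type u} [Field k] [Ring R] [Algebra k R]
    (h : IsHomSmooth k R) : cdAlg k R ≠ ⊤ := by
  obtain ⟨n, hn⟩ := h
  exact ne_top_of_le_ne_top (ENat.natCast_ne_top n) (extPD_le_iff.2 hn.hasProjectiveDimensionLE)

end FiniteResolutions

namespace LeftComodAlg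

section Twist

variable {k A R : Type u} [Field k] [Ring A] [Bialgebra k A] [Ring R] [Algebra k R]
  (c : LeftComodAlg k A R)

/-- The coaction of a comodule algebra, as a homomorphism of algebras. -/
noncomputable def lamHom : R →ₐ[k] A ⊗[k] R := AlgHom.ofLinearMap c.lam c.map_one c.map_mul

/-- The coaction `x ⊗ y ↦ x₍₋₁₎ ⊗ x₍₀₎ ⊗ y` on the enveloping algebra, with `Rᵐᵒᵖ` coinvariant. -/
noncomputable def envCoact : R ⊗[k] Rᵐᵒᵖ →ₐ[k] A ⊗[k] (R ⊗[k] Rᵐᵒᵖ) :=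
  (Algebra.TensorProduct.assoc k k k A R Rᵐᵒᵖ).toAlgHom.comp
    (Algebra.TensorProduct.map c.lamHom (AlgHom.id k Rᵐᵒᵖ))

lemma envCoact_one_tmul (y : Rᵐᵒᵖ) : c.envCoact (1 ⊗ₜ y) = 1 ⊗ₜ (1 ⊗ₜ y) := by
  simp [envCoact, Algebra.TensorProduct.one_def]

section Action

variable (k A R) in
/-- The action of `A ⊗ (R ⊗ Rᵐᵒᵖ)` on `X ⊗ R`, for an `A`-module `X`. -/
noncomputable def tensorAct (X : Type u) [AddCommGroup X] [Module k X] [Module A X]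
    [IsScalarTower k A X] : A ⊗[k] (R ⊗[k] Rᵐᵒᵖ) →ₐ[k] Module.End k (X ⊗[k] R) :=
  Module.endTensorEndAlgHom.comp
    (Algebra.TensorProduct.map (Algebra.lsmul k k X) (AlgHom.mulLeftRight k R))

variable {X Y : Type u} [AddCommGroup X] [Module k X] [Module A X] [IsScalarTower k A X]
  [AddCommGroup Y] [Module k Y] [Module A Y] [IsScalarTower k A Y]

lemma tensorAct_tmul (a : A) (t : R ⊗[k] Rᵐᵒᵖ) (v : X) (r : R) :
    tensorAct k A R X (a ⊗ₜ t) (v ⊗ₜ r) = (a • v) ⊗ₜ AlgHom.mulLeftRight k R t r := rfl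

variable (X) in
/-- The action `(x ⊗ y) • (v ⊗ r) = x₍₋₁₎ • v ⊗ x₍₀₎ry` of the enveloping algebra of `R`
on `X ⊗ R`. -/
noncomputable def twistAct : R ⊗[k] Rᵐᵒᵖ →ₐ[k] Module.End k (X ⊗[k] R) :=
  (tensorAct k A R X).comp c.envCoact

lemma twistAct_one_tmul (y : Rᵐᵒᵖ) (v : X) (r : R) :
    c.twistAct X (1 ⊗ₜ y) (v ⊗ₜ r) = v ⊗ₜ (r * y.unop) := by
  simp [twistAct, envCoact_one_tmul, tensorAct_tmul]

lemma rTensor_tensorAct (f : X →ₗ[A] Y) (e : A ⊗[k] (R ⊗[k] Rᵐᵒᵖ)) (w : X ⊗[k] R) :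
    (f.restrictScalars k).rTensor R (tensorAct k A R X e w) =
      tensorAct k A R Y e ((f.restrictScalars k).rTensor R w) := by
  induction e with
  | zero => simp
  | add e e' he he' => simp only [_root_.map_add, LinearMap.add_apply, he, he']
  | tmul a t =>
    induction w with
    | zero => simp
    | add w w' hw hw' => simp only [_root_.map_add, hw, hw']
    | tmul v r => simp [tensorAct_tmul]

lemma rTensor_twistAct (f : X →ₗ[A] Y) (t : R ⊗[k] Rᵐᵒᵖ) (w : X ⊗[k] R) :
    (f.restrictScalars k).rTensor R (c.twistAct X t w) =
      c.twistAct Y t ((f.restrictScalars k).rTensor R w) :=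
  rTensor_tensorAct f (c.envCoact t) w

/-- The canonical map, as a map from the enveloping algebra. -/
noncomputable def canEnv : R ⊗[k] Rᵐᵒᵖ →ₗ[k] A ⊗[k] R :=
  c.can ∘ₗ (MulOpposite.opLinearEquiv k).symm.toLinearMap.lTensor R

lemma canEnv_tmul (x : R) (y : Rᵐᵒᵖ) : c.canEnv (x ⊗ₜ y) = c.lam x * (1 ⊗ₜ y.unop) := by
  change (LinearMap.mul' k R).lTensor A (TensorProduct.assoc k A R R (c.lam x ⊗ₜ y.unop)) = _
  induction c.lam x with
  | zero => simp
  | add z z' hz hz' => simp only [add_tmul, _root_.map_add, hz, hz', add_mul]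
  | tmul a r => simp

lemma canEnv_eq_twistAct (t : R ⊗[k] Rᵐᵒᵖ) : c.canEnv t = c.twistAct A t (1 ⊗ₜ 1) := by
  induction t with
  | zero => simp
  | add t t' ht ht' => simp only [_root_.map_add, LinearMap.add_apply, ht, ht']
  | tmul x y =>
    rw [canEnv_tmul]
    change _ = tensorAct k A R A (TensorProduct.assoc k A R Rᵐᵒᵖ (c.lam x ⊗ₜ y)) (1 ⊗ₜ 1)
    induction c.lam x with
    | zero => simp
    | add z z' hz hz' => simp only [_root_.map_add, LinearMap.add_apply, add_tmul, hz, hz', add_mul]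
    | tmul a r => simp [tensorAct_tmul]

lemma twistAct_tmul (t : R ⊗[k] Rᵐᵒᵖ) (v : X) (r : R) :
    c.twistAct X t (v ⊗ₜ r) = ((LinearMap.toSpanSingleton A X v).restrictScalars k).rTensor R
      (c.canEnv (t * (1 ⊗ₜ MulOpposite.op r))) := by
  rw [canEnv_eq_twistAct, rTensor_twistAct, _root_.map_mul, Module.End.mul_apply,
    LinearMap.rTensor_tmul, twistAct_one_tmul]
  simp

end Action

section Translation

variable {c} (hc : Function.Bijective c.can)

/-- The canonical isomorphism of a Galois object, on the enveloping algebra. -/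
noncomputable def canEquiv : R ⊗[k] Rᵐᵒᵖ ≃ₗ[k] A ⊗[k] R :=
  (MulOpposite.opLinearEquiv k).symm.lTensor R ≪≫ₗ .ofBijective c.can hc

lemma canEquiv_apply (t : R ⊗[k] Rᵐᵒᵖ) : canEquiv hc t = c.canEnv t := rfl

lemma canEnv_canEquiv_symm (z : A ⊗[k] R) : c.canEnv ((canEquiv hc).symm z) = z :=
  (canEquiv hc).apply_symm_apply z

lemma twistAct_canEquiv_symm_tmul_one {X : Type u} [AddCommGroup X] [Module k X] [Module A X]
    [IsScalarTower k A X] (a : A) (v : X) :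
    c.twistAct X ((canEquiv hc).symm (a ⊗ₜ 1)) (v ⊗ₜ 1) = (a • v) ⊗ₜ 1 := by
  rw [twistAct_tmul, MulOpposite.op_one, ← Algebra.TensorProduct.one_def, mul_one,
    canEnv_canEquiv_symm]
  simp

/-- The translation map `a ↦ can⁻¹(a ⊗ 1)` of a Galois object, an algebra homomorphism into
the enveloping algebra. -/
noncomputable def transl : A →ₐ[k] R ⊗[k] Rᵐᵒᵖ :=
  AlgHom.ofLinearMap ((canEquiv hc).symm.toLinearMap ∘ₗ (TensorProduct.mk k A R).flip 1)
    (by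
      refine (canEquiv hc).symm_apply_eq.2 ?_
      rw [canEquiv_apply, canEnv_eq_twistAct, _root_.map_one (c.twistAct A), Module.End.one_apply]
      rfl)
    (fun a b => by
      refine (canEquiv hc).symm_apply_eq.2 ?_
      rw [canEquiv_apply, canEnv_eq_twistAct, _root_.map_mul (c.twistAct A), Module.End.mul_apply,
        ← canEnv_eq_twistAct]
      exact ((congrArg _ (canEnv_canEquiv_symm hc (b ⊗ₜ 1))).trans
        (twistAct_canEquiv_symm_tmul_one hc a b)).symm)

lemma canEnv_transl (a : A) : c.canEnv (transl hc a) = a ⊗ₜ 1 := canEnv_canEquiv_symm hc (a ⊗ₜ 1)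

lemma canEquiv_symm_tmul (a : A) (r : R) :
    (canEquiv hc).symm (a ⊗ₜ r) = (1 ⊗ₜ MulOpposite.op r) * transl hc a := by
  refine (canEquiv hc).symm_apply_eq.2 ?_
  rw [canEquiv_apply, canEnv_eq_twistAct, _root_.map_mul, Module.End.mul_apply,
    ← canEnv_eq_twistAct, canEnv_transl, twistAct_one_tmul, one_mul, MulOpposite.unop_op]

end Translation

section TwistModule

/-- The bimodule `X ⊗ R`: the space `X ⊗ R`, on which the enveloping algebra acts through
`twistAct`. -/
def Twist (_c : LeftComodAlg k A R) (X : Type u) [AddCommGroup X] [Module k X] : Type u := X ⊗[k] R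

variable {X Y : Type u} [AddCommGroup X] [Module k X] [Module A X] [IsScalarTower k A X]
  [AddCommGroup Y] [Module k Y] [Module A Y] [IsScalarTower k A Y]

noncomputable instance : AddCommGroup (c.Twist X) := inferInstanceAs (AddCommGroup (X ⊗[k] R))

noncomputable instance : Module (R ⊗[k] Rᵐᵒᵖ) (c.Twist X) :=
  Module.compHom (X ⊗[k] R) (c.twistAct X).toRingHom

namespace Twist

/-- The identity, as an isomorphism from the bimodule `X ⊗ R` to its underlying space. -/
noncomputable def toTensor : c.Twist X ≃+ X ⊗[k] R := AddEquiv.refl _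

lemma toTensor_smul (t : R ⊗[k] Rᵐᵒᵖ) (z : c.Twist X) :
    toTensor c (t • z) = c.twistAct X t (toTensor c z) := rfl

/-- Functoriality of the bimodule `X ⊗ R` in the `A`-module `X`. -/
noncomputable def map (f : X →ₗ[A] Y) : c.Twist X →ₗ[R ⊗[k] Rᵐᵒᵖ] c.Twist Y where
  toFun z := (toTensor c).symm ((f.restrictScalars k).rTensor R (toTensor c z))
  map_add' z w := by simp only [_root_.map_add]
  map_smul' t z := (toTensor c).symm_apply_eq.2 (c.rTensor_twistAct f t (toTensor c z))

variable {M : Type u} [AddCommGroup M] [Module (R ⊗[k] Rᵐᵒᵖ) M]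

lemma hom_ext {f g : c.Twist X →ₗ[R ⊗[k] Rᵐᵒᵖ] M}
    (h : ∀ v : X, f ((toTensor c).symm (v ⊗ₜ 1)) = g ((toTensor c).symm (v ⊗ₜ 1))) : f = g := by
  refine LinearMap.ext fun z => ?_
  obtain ⟨w, rfl⟩ := (toTensor c).symm.surjective z
  induction w with
  | zero => simp only [_root_.map_zero]
  | add w w' hw hw' => simp only [_root_.map_add, hw, hw']
  | tmul v r =>
    have tmul_eq_smul : (toTensor c).symm (v ⊗ₜ[k] r) =
        ((1 : R) ⊗ₜ[k] MulOpposite.op r) • (toTensor c).symm (v ⊗ₜ 1) := by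
      rw [AddEquiv.symm_apply_eq, toTensor_smul, AddEquiv.apply_symm_apply, twistAct_one_tmul]
      simp
    rw [tmul_eq_smul, map_smul, map_smul, h]

section Lift

variable {c} (hc : Function.Bijective c.can) [Module k M] [IsScalarTower k (R ⊗[k] Rᵐᵒᵖ) M]
  (g : X →ₛₗ[(transl hc).toRingHom] M)

lemma map_smul_of_transl (a : k) (v : X) : g (a • v) = a • g v := by
  have map_algebraMap : g (algebraMap k A a • v) = transl hc (algebraMap k A a) • g v :=
    g.map_smulₛₗ _ v
  rwa [(transl hc).commutes, algebraMap_smul, algebraMap_smul] at map_algebraMap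

/-- The linear map `v ⊗ r ↦ (1 ⊗ r) • g v` underlying `lift`. -/
noncomputable def liftLinear : X ⊗[k] R →ₗ[k] M :=
  TensorProduct.lift <| LinearMap.mk₂ k (fun v r => ((1 : R) ⊗ₜ[k] MulOpposite.op r) • g v)
    (fun v w r => by rw [g.map_add, smul_add])
    (fun a v r => by rw [map_smul_of_transl, smul_comm])
    (fun v r s => by rw [MulOpposite.op_add, tmul_add, add_smul])
    (fun a v r => by rw [MulOpposite.op_smul, tmul_smul, smul_assoc])

lemma liftLinear_tmul (v : X) (r : R) :
    liftLinear hc g (v ⊗ₜ r) = ((1 : R) ⊗ₜ[k] MulOpposite.op r) • g v := rfl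

lemma liftLinear_rTensor_toSpanSingleton (v : X) (z : A ⊗[k] R) :
    liftLinear hc g (((LinearMap.toSpanSingleton A X v).restrictScalars k).rTensor R z) =
      (canEquiv hc).symm z • g v := by
  refine LinearMap.congr_fun
    (f := liftLinear hc g ∘ₗ ((LinearMap.toSpanSingleton A X v).restrictScalars k).rTensor R)
    (g := (LinearMap.toSpanSingleton (R ⊗[k] Rᵐᵒᵖ) M (g v)).restrictScalars k ∘ₗ
      (canEquiv hc).symm.toLinearMap) (TensorProduct.ext' fun a r => ?_) z
  change ((1 : R) ⊗ₜ[k] MulOpposite.op r) • g (a • v) = (canEquiv hc).symm (a ⊗ₜ r) • g v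
  rw [canEquiv_symm_tmul, mul_smul]
  exact congrArg _ (g.map_smulₛₗ a v)

lemma liftLinear_twistAct (t : R ⊗[k] Rᵐᵒᵖ) (w : X ⊗[k] R) :
    liftLinear hc g (c.twistAct X t w) = t • liftLinear hc g w := by
  induction w with
  | zero => simp only [_root_.map_zero, smul_zero]
  | add w w' hw hw' => simp only [_root_.map_add, hw, hw', smul_add]
  | tmul v r =>
    rw [twistAct_tmul, liftLinear_rTensor_toSpanSingleton, liftLinear_tmul, ← mul_smul,
      ← canEquiv_apply hc, LinearEquiv.symm_apply_apply]

/-- The bimodule map `X ⊗ R → M` induced by a map `X → M` that is linear along the translation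
map. -/
noncomputable def lift : c.Twist X →ₗ[R ⊗[k] Rᵐᵒᵖ] M where
  toFun z := liftLinear hc g (toTensor c z)
  map_add' z w := by simp only [_root_.map_add]
  map_smul' t z := liftLinear_twistAct hc g t (toTensor c z)

lemma lift_tmul_one (v : X) : lift hc g ((toTensor c).symm (v ⊗ₜ 1)) = g v := one_smul _ _

/-- The universal property of the bimodule `X ⊗ R`. -/
noncomputable def homEquiv :
    (c.Twist X →ₗ[R ⊗[k] Rᵐᵒᵖ] M) ≃ (X →ₛₗ[(transl hc).toRingHom] M) where
  toFun f :=
    { toFun v := f ((toTensor c).symm (v ⊗ₜ 1))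
      map_add' v w := by rw [add_tmul, _root_.map_add, _root_.map_add]
      map_smul' a v := (congrArg f (twistAct_canEquiv_symm_tmul_one hc a v).symm).trans
        (map_smul f (transl hc a) ((toTensor c).symm (v ⊗ₜ 1))) }
  invFun := lift hc
  left_inv f := hom_ext c fun v => lift_tmul_one hc _ v
  right_inv g := LinearMap.ext fun v => lift_tmul_one hc g v

end Lift

end Twist

end TwistModule

end Twist

section TwistFunctor

attribute [local instance] ModuleCat.moduleOfAlgebraModule
  ModuleCat.isScalarTower_of_algebra_moduleCat

variable {k A R : Type u} [Field k] [Ring A] [Bialgebra k A] [Ring R] [Algebra k R]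

/-- The functor `X ↦ X ⊗ R` from `A`-modules to `R`-bimodules. -/
noncomputable def twistFunctor (c : LeftComodAlg k A R) :
    ModuleCat.{u} A ⥤ ModuleCat.{u} (R ⊗[k] Rᵐᵒᵖ) where
  obj X := ModuleCat.of _ (c.Twist X)
  map f := ModuleCat.ofHom (Twist.map c f.hom)
  map_id X := by
    ext z
    exact LinearMap.congr_fun (LinearMap.rTensor_id R X) z
  map_comp f g := by
    ext z
    exact LinearMap.congr_fun (LinearMap.rTensor_comp R (g.hom.restrictScalars k)
      (f.hom.restrictScalars k)) z

instance (c : LeftComodAlg k A R) : c.twistFunctor.Additive where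
  map_add {X Y f g} := by
    ext z
    exact LinearMap.congr_fun (LinearMap.rTensor_add R (f.hom.restrictScalars k)
      (g.hom.restrictScalars k)) z

instance (c : LeftComodAlg k A R) : c.twistFunctor.PreservesHomology :=
  Functor.preservesHomology_of_map_exact _ fun S hS => by
    rw [ShortComplex.ShortExact.moduleCat_exact_iff_function_exact] at hS ⊢
    exact Module.Flat.rTensor_exact (R := k) R (f := S.f.hom.restrictScalars k)
      (g := S.g.hom.restrictScalars k) hS

/-- The functor `X ↦ X ⊗ R` is left adjoint to restriction along the translation map. -/
noncomputable def twistAdjunction {c : LeftComodAlg k A R} (hc : Function.Bijective c.can) :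
    c.twistFunctor ⊣ ModuleCat.restrictScalars.{u} (transl hc).toRingHom :=
  Adjunction.mkOfHomEquiv
    { homEquiv X M := ConcreteCategory.homEquiv.trans <|
        (Twist.homEquiv hc).trans (ModuleCat.semilinearMapAddEquiv _ X M).toEquiv
      homEquiv_naturality_left_symm f g := by
        refine ModuleCat.hom_ext (Twist.hom_ext c fun v => ?_)
        exact (Twist.lift_tmul_one hc _ v).trans (Twist.lift_tmul_one hc
          ((ModuleCat.semilinearMapAddEquiv _ _ _).symm g) (f.hom v)).symm
      homEquiv_naturality_right f g := rfl }

section Trivial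

attribute [local instance] TensorProduct.Algebra.module

lemma lid_rTensor_counit_mul_one_tmul (z : A ⊗[k] R) (r : R) :
    TensorProduct.lid k R (Coalgebra.counit.rTensor R (z * (1 ⊗ₜ r))) =
      TensorProduct.lid k R (Coalgebra.counit.rTensor R z) * r := by
  induction z with
  | zero => simp
  | add z z' hz hz' => simp only [add_mul, _root_.map_add, hz, hz']
  | tmul a s => simp

lemma lid_rTensor_counit_canEnv (c : LeftComodAlg k A R) (t : R ⊗[k] Rᵐᵒᵖ) :
    TensorProduct.lid k R (Coalgebra.counit.rTensor R (c.canEnv t)) =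
      AlgHom.mulLeftRight k R t 1 := by
  induction t with
  | zero => simp
  | add t t' ht ht' => simp only [_root_.map_add, LinearMap.add_apply, ht, ht']
  | tmul x y =>
    rw [canEnv_tmul, lid_rTensor_counit_mul_one_tmul, AlgHom.mulLeftRight_apply, mul_one]
    exact congrArg (· * y.unop) (LinearMap.congr_fun c.counit_comp x)

section

variable (c : LeftComodAlg k A R) {X : Type u} [AddCommGroup X] [Module k X] [Module A X]
  [IsScalarTower k A X]

lemma lid_rTensor_twistAct {e : X →ₗ[k] k}
    (he : ∀ (a : A) (v : X), e (a • v) = Coalgebra.counit (R := k) a * e v)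
    (t : R ⊗[k] Rᵐᵒᵖ) (w : X ⊗[k] R) :
    TensorProduct.lid k R (e.rTensor R (c.twistAct X t w)) =
      AlgHom.mulLeftRight k R t (TensorProduct.lid k R (e.rTensor R w)) := by
  induction w with
  | zero => simp
  | add w w' hw hw' => simp only [_root_.map_add, hw, hw']
  | tmul v r =>
    have comp_toSpanSingleton : e ∘ₗ (LinearMap.toSpanSingleton A X v).restrictScalars k =
        e v • Coalgebra.counit :=
      LinearMap.ext fun a => (he a v).trans (mul_comm _ _)
    rw [twistAct_tmul, ← LinearMap.rTensor_comp_apply, comp_toSpanSingleton,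
      LinearMap.rTensor_smul, LinearMap.smul_apply, map_smul, lid_rTensor_counit_canEnv,
      _root_.map_mul, Module.End.mul_apply, AlgHom.mulLeftRight_apply]
    simp

/-- Twisting the trivial module gives the regular bimodule `R`. -/
noncomputable def twistTrivialEquiv (e : X ≃ₗ[k] k)
    (he : ∀ (a : A) (v : X), e (a • v) = Coalgebra.counit (R := k) a * e v) :
    c.Twist X ≃ₗ[R ⊗[k] Rᵐᵒᵖ] R :=
  { (Twist.toTensor c).trans (e.rTensor R ≪≫ₗ TensorProduct.lid k R).toAddEquiv with
    map_smul' t z := c.lid_rTensor_twistAct (e := e.toLinearMap) he t (Twist.toTensor c z) }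

end

lemma cdAlg_eq_extPD_twistFunctor_obj (c : LeftComodAlg k A R) :
    cdAlg k R = extPD (c.twistFunctor.obj (ModuleCat.of A (TrivialModule k A))) := by
  let : Module k (TrivialModule k A) :=
    ModuleCat.moduleOfAlgebraModule (ModuleCat.of A (TrivialModule k A))
  have : IsScalarTower k A (TrivialModule k A) :=
    ModuleCat.isScalarTower_of_algebra_moduleCat (ModuleCat.of A (TrivialModule k A))
  have counit_mul (a v : k) : Coalgebra.counit (R := k) (algebraMap k A a) * v = a * v := by
    rw [Bialgebra.counit_algebraMap]
  let e : TrivialModule k A ≃ₗ[k] k := { AddEquiv.refl k with map_smul' := counit_mul }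
  exact extPD_eq_of_iso (c.twistTrivialEquiv e fun _ _ => rfl).toModuleIso.symm

end Trivial

end TwistFunctor

section Colinearity

variable {k A R : Type u} [Field k] [Ring A] [Bialgebra k A] [Ring R] [Algebra k R]

lemma lTensor_canEnv_assoc_tmul (c : LeftComodAlg k A R) (z : A ⊗[k] R) (y : Rᵐᵒᵖ) :
    c.canEnv.lTensor A (TensorProduct.assoc k A R Rᵐᵒᵖ (z ⊗ₜ y)) =
      c.lam.lTensor A z * (1 ⊗ₜ (1 ⊗ₜ y.unop)) := by
  induction z with
  | zero => simp
  | add z z' hz hz' => simp only [add_tmul, _root_.map_add, hz, hz', add_mul]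
  | tmul a r => simp [canEnv_tmul]

lemma assoc_comul_rTensor_mul (z : A ⊗[k] R) (r : R) :
    TensorProduct.assoc k A A R (Coalgebra.comul.rTensor R (z * (1 ⊗ₜ r))) =
      TensorProduct.assoc k A A R (Coalgebra.comul.rTensor R z) * (1 ⊗ₜ (1 ⊗ₜ r)) := by
  induction z with
  | zero => simp
  | add z z' hz hz' => simp only [_root_.map_add, hz, hz', add_mul]
  | tmul a s =>
    simp only [Algebra.TensorProduct.tmul_mul_tmul, mul_one, LinearMap.rTensor_tmul]
    induction Coalgebra.comul (R := k) a with
    | zero => simp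
    | add w w' hw hw' => simp only [add_tmul, _root_.map_add, hw, hw', add_mul]
    | tmul a b => simp

lemma lTensor_canEnv_envCoact (c : LeftComodAlg k A R) (t : R ⊗[k] Rᵐᵒᵖ) :
    c.canEnv.lTensor A (c.envCoact t) =
      TensorProduct.assoc k A A R (Coalgebra.comul.rTensor R (c.canEnv t)) := by
  induction t with
  | zero => simp
  | add t t' ht ht' => simp only [_root_.map_add, ht, ht']
  | tmul x y =>
    have lam_coassoc : TensorProduct.assoc k A A R (Coalgebra.comul.rTensor R (c.lam x)) =
        c.lam.lTensor A (c.lam x) := LinearMap.congr_fun c.coassoc x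
    rw [canEnv_tmul, assoc_comul_rTensor_mul, lam_coassoc, ← lTensor_canEnv_assoc_tmul]
    rfl

variable {c : LeftComodAlg k A R} (hc : Function.Bijective c.can)

lemma envCoact_comp_transl : c.envCoact.comp (transl hc) =
    (Algebra.TensorProduct.map (AlgHom.id k A) (transl hc)).comp (Bialgebra.comulAlgHom k A) := by
  refine AlgHom.ext fun a => ((canEquiv hc).lTensor A).injective ?_
  refine (c.lTensor_canEnv_envCoact _).trans ?_
  refine (congrArg _ (congrArg _ (canEnv_transl hc a))).trans ?_
  rw [LinearMap.rTensor_tmul]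
  change _ = c.canEnv.lTensor A ((transl hc).toLinearMap.lTensor A (Coalgebra.comul a))
  induction Coalgebra.comul (R := k) a with
  | zero => simp
  | add z z' hz hz' => simp only [add_tmul, _root_.map_add, hz, hz']
  | tmul a b => simp [canEnv_transl]

end Colinearity

end LeftComodAlg

section HopfModule

variable {k A T : Type u} [Field k] [Ring A] [HopfAlgebra k A] [Ring T] [Algebra k T]
  {δ : T →ₐ[k] A ⊗[k] T} {κ : A →ₐ[k] T}

/-- The map `a ⊗ t ↦ κ(S(a))t`. -/
noncomputable def antipodeMul (κ : A →ₐ[k] T) : A ⊗[k] T →ₗ[k] T :=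
  LinearMap.mul' k T ∘ₗ (κ.toLinearMap ∘ₗ HopfAlgebra.antipode k).rTensor T

lemma antipodeMul_tmul (a : A) (t : T) :
    antipodeMul κ (a ⊗ₜ t) = κ (HopfAlgebra.antipode k a) * t := rfl

lemma antipodeMul_map_comul_mul (a : A) (z : A ⊗[k] T) :
    antipodeMul κ (Algebra.TensorProduct.map (AlgHom.id k A) κ (Coalgebra.comul a) * z) =
      Coalgebra.counit (R := k) a • antipodeMul κ z := by
  induction z with
  | zero => simp
  | add z z' hz hz' => simp only [mul_add, map_add, hz, hz', smul_add]
  | tmul b t =>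
    have mul_tmul (w : A ⊗[k] A) :
        antipodeMul κ (Algebra.TensorProduct.map (AlgHom.id k A) κ w * (b ⊗ₜ t)) =
          κ (HopfAlgebra.antipode k b) *
            (κ (LinearMap.mul' k A ((HopfAlgebra.antipode k).rTensor A w)) * t) := by
      induction w with
      | zero => simp
      | add w w' hw hw' => simp only [map_add, add_mul, mul_add, hw, hw']
      | tmul x y => simp [antipodeMul_tmul, HopfAlgebra.antipode_mul_antidistrib, mul_assoc]
    rw [mul_tmul, HopfAlgebra.mul_antipode_rTensor_comul_apply, antipodeMul_tmul, κ.commutes,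
      Algebra.algebraMap_eq_smul_one, smul_mul_assoc, one_mul, mul_smul_comm]

variable [Nontrivial T] (h : δ.comp κ =
  (Algebra.TensorProduct.map (AlgHom.id k A) κ).comp (Bialgebra.comulAlgHom k A))
include h

lemma exists_functional_of_comodule_map :
    ∃ f : T →ₗ[k] k, f 1 = 1 ∧ ∀ a t, f (κ a * t) = Coalgebra.counit (R := k) a * f t := by
  obtain ⟨φ, hφ⟩ := LinearMap.exists_leftInverse_of_injective (Algebra.linearMap k T)
    (LinearMap.ker_eq_bot.2 (FaithfulSMul.algebraMap_injective k T))
  have φ_one : φ 1 = 1 := by simpa using LinearMap.congr_fun hφ 1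
  refine ⟨φ ∘ₗ antipodeMul κ ∘ₗ δ.toLinearMap, ?_, fun a t => ?_⟩
  · simp [Algebra.TensorProduct.one_def, antipodeMul_tmul, φ_one]
  · have δ_κ : δ (κ a) = _ := DFunLike.congr_fun h a
    simp only [LinearMap.comp_apply, AlgHom.toLinearMap_apply]
    rw [map_mul, δ_κ]
    exact (congrArg φ (antipodeMul_map_comul_mul a (δ t))).trans (map_smul φ _ _)

lemma exists_retraction_of_comodule_map :
    ∃ ρ : T →ₗ[k] A, ρ 1 = 1 ∧ ∀ a t, ρ (κ a * t) = a * ρ t := by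
  obtain ⟨f, f_one, f_mul⟩ := exists_functional_of_comodule_map h
  have f_map_mul (w : A ⊗[k] A) (z : A ⊗[k] T) : TensorProduct.rid k A
      (f.lTensor A (Algebra.TensorProduct.map (AlgHom.id k A) κ w * z)) =
      TensorProduct.rid k A (Coalgebra.counit.lTensor A w) *
        TensorProduct.rid k A (f.lTensor A z) := by
    induction w with
    | zero => simp
    | add w w' hw hw' => simp only [map_add, add_mul, hw, hw']
    | tmul x y =>
      induction z with
      | zero => simp
      | add z z' hz hz' => simp only [map_add, mul_add, hz, hz']
      | tmul b t => simp [f_mul, mul_smul, smul_comm (f t)]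
  refine ⟨(TensorProduct.rid k A).toLinearMap ∘ₗ f.lTensor A ∘ₗ δ.toLinearMap, ?_,
    fun a t => ?_⟩
  · simp [Algebra.TensorProduct.one_def, f_one]
  · have δ_κ : δ (κ a) = _ := DFunLike.congr_fun h a
    simp only [LinearMap.comp_apply, AlgHom.toLinearMap_apply, LinearEquiv.coe_coe]
    rw [map_mul, δ_κ]
    refine (f_map_mul (Coalgebra.comul a) (δ t)).trans ?_
    rw [Coalgebra.lTensor_counit_comul]
    simp

end HopfModule

section RestrictScalars

variable {S T : Type u} [Ring S] [Ring T] (f : S →+* T)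

lemma exists_epi_restrictScalars_obj {ρ : T →+ S} (ρ_one : ρ 1 = 1)
    (ρ_mul : ∀ s t, ρ (f s * t) = s * ρ t) (W : ModuleCat.{u} S) :
    ∃ (N : ModuleCat.{u} T) (p : (ModuleCat.restrictScalars f).obj N ⟶ W), Epi p := by
  let _ := Module.compHom T f
  let ρ' : T →ₗ[S] S := { ρ with map_smul' := ρ_mul }
  let p : (W →₀ T) →ₗ[S] W := Finsupp.lsum ℕ fun w => LinearMap.toSpanSingleton S W w ∘ₗ ρ'
  have p_single (w : W) : p (Finsupp.single w 1) = w := by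
    have : p (Finsupp.single w 1) = ρ 1 • w := Finsupp.lsum_single ..
    rw [this, ρ_one, one_smul]
  let q : (ModuleCat.restrictScalars.{u} f).obj (ModuleCat.of T (W →₀ T)) →ₗ[S] W :=
    { p with map_smul' := map_smul p }
  exact ⟨ModuleCat.of T (W →₀ T), ModuleCat.ofHom q, (ModuleCat.epi_iff_surjective _).2
    fun w => ⟨(Finsupp.single w (1 : T) : W →₀ T), p_single w⟩⟩

/-- Restricting along `g` and then along a section of `g` does nothing. -/
noncomputable def restrictScalarsSectionIso (g : T →+* S) (h : g.comp f = RingHom.id S)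
    (M : ModuleCat.{u} S) :
    (ModuleCat.restrictScalars.{u} f).obj ((ModuleCat.restrictScalars.{u} g).obj M) ≅ M :=
  (ModuleCat.restrictScalarsComp'App f g (RingHom.id S) h.symm M).symm ≪≫
    ModuleCat.restrictScalarsId'App (RingHom.id S) rfl M

end RestrictScalars

namespace LeftComodAlg

variable {k A R : Type u} [Field k] [Ring A] [HopfAlgebra k A] [Ring R] [Algebra k R]

lemma IsGalois.cdHopf_eq_cdAlg {c : LeftComodAlg k A R} (hc : c.IsGalois)
    (h : cdHopf k A ≠ ⊤) : cdHopf k A = cdAlg k R := by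
  obtain ⟨_, hcan⟩ := hc
  obtain ⟨ρ, ρ_one, ρ_mul⟩ := exists_retraction_of_comodule_map (envCoact_comp_transl hcan)
  rw [c.cdAlg_eq_extPD_twistFunctor_obj]
  exact (extPD_leftAdjoint_obj_of_epi (twistAdjunction hcan)
    (exists_epi_restrictScalars_obj (transl hcan).toRingHom
      (ρ := ρ.toAddMonoidHom) ρ_one ρ_mul) h).symm

end LeftComodAlg

section Shear

open WithConv

variable {k C B : Type*} [CommSemiring k] [AddCommMonoid C] [Module k C] [Semiring B] [Algebra k B]

lemma lTensor_mul'_assoc_tmul (z : C ⊗[k] B) (y : B) :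
    (LinearMap.mul' k B).lTensor C (TensorProduct.assoc k C B B (z ⊗ₜ y)) =
      (LinearMap.mulRight k y).lTensor C z := by
  induction z with
  | zero => simp
  | add z z' hz hz' => simp only [add_tmul, map_add, hz, hz']
  | tmul a x => simp

variable [Coalgebra k C]

/-- The map `a ⊗ y ↦ a₍₁₎ ⊗ f(a₍₂₎)y`. Sending `f` to it turns convolution into composition. -/
noncomputable def shear (f : WithConv (C →ₗ[k] B)) : Module.End k (C ⊗[k] B) :=
  (LinearMap.mul' k B).lTensor C ∘ₗ (TensorProduct.assoc k C B B).toLinearMap ∘ₗ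
    (f.ofConv.lTensor C ∘ₗ Coalgebra.comul).rTensor B

lemma shear_tmul (f : WithConv (C →ₗ[k] B)) (a : C) (y : B) :
    shear f (a ⊗ₜ y) =
      (LinearMap.mulRight k y ∘ₗ f.ofConv).lTensor C (Coalgebra.comul a) := by
  rw [LinearMap.lTensor_comp_apply, ← lTensor_mul'_assoc_tmul]
  rfl

lemma shear_lTensor (f g : WithConv (C →ₗ[k] B)) (y : B) (z : C ⊗[k] C) :
    shear f ((LinearMap.mulRight k y ∘ₗ g.ofConv).lTensor C z) =
      (LinearMap.mulRight k y ∘ₗ LinearMap.mul' k B ∘ₗ TensorProduct.map f.ofConv g.ofConv).lTensor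
        C (TensorProduct.assoc k C C C (Coalgebra.comul.rTensor C z)) := by
  induction z with
  | zero => simp
  | add z z' hz hz' => simp only [map_add, hz, hz']
  | tmul a b =>
    rw [LinearMap.lTensor_tmul, shear_tmul, LinearMap.rTensor_tmul]
    induction Coalgebra.comul (R := k) a with
    | zero => simp
    | add w w' hw hw' => simp only [map_add, hw, hw', add_tmul]
    | tmul a a' => simp [mul_assoc]

lemma shear_mul (f g : WithConv (C →ₗ[k] B)) : shear (f * g) = shear f * shear g :=
  TensorProduct.ext' fun a y => by
    rw [Module.End.mul_apply, shear_tmul g, shear_lTensor, Coalgebra.coassoc_apply, shear_tmul,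
      ← LinearMap.lTensor_comp_apply]
    rfl

lemma shear_one : shear (1 : WithConv (C →ₗ[k] B)) = 1 :=
  TensorProduct.ext' fun a y => by
    have mulRight_one : LinearMap.mulRight k y ∘ₗ (1 : WithConv (C →ₗ[k] B)).ofConv =
        LinearMap.toSpanSingleton k B y ∘ₗ Coalgebra.counit := by
      ext; simp [Algebra.smul_def]
    rw [shear_tmul, mulRight_one, LinearMap.lTensor_comp_apply, Coalgebra.lTensor_counit_comul]
    simp

lemma bijective_shear_of_mul_eq_one {f g : WithConv (C →ₗ[k] B)} (hfg : f * g = 1)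
    (hgf : g * f = 1) : Function.Bijective (shear f) :=
  (Module.End.isUnit_iff _).1
    ⟨⟨shear f, shear g, by rw [← shear_mul, hfg, shear_one],
      by rw [← shear_mul, hgf, shear_one]⟩, rfl⟩

end Shear

section Regular

variable (k A : Type u) [Field k] [Ring A]

/-- The left comodule algebra `A`, coacting on itself by the comultiplication. -/
noncomputable def regularComodAlg [Bialgebra k A] : LeftComodAlg k A A where
  lam := Coalgebra.comul
  coassoc := Coalgebra.coassoc
  counit_comp := by
    rw [Coalgebra.rTensor_counit_comp_comul]
    ext
    simp
  map_one := Bialgebra.comul_one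
  map_mul := Bialgebra.comul_mul

lemma regularComodAlg_can_bijective [HopfAlgebra k A] :
    Function.Bijective (regularComodAlg k A).can := by
  have can_eq_shear : (regularComodAlg k A).can = shear (WithConv.toConv LinearMap.id) := by
    rw [shear, WithConv.ofConv_toConv, LinearMap.lTensor_id, LinearMap.id_comp]
    rfl
  rw [can_eq_shear]
  exact bijective_shear_of_mul_eq_one LinearMap.id_mul_antipode LinearMap.antipode_mul_id

/-- The homomorphism `x ⊗ y ↦ ε(y)x` from the enveloping algebra of `A` to `A`. -/
noncomputable def envCounit [Bialgebra k A] : A ⊗[k] Aᵐᵒᵖ →ₐ[k] A :=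
  Algebra.TensorProduct.lift (AlgHom.id k A)
    ((Algebra.ofId k A).comp ((AlgEquiv.toOpposite k k).symm.toAlgHom.comp
      (AlgHom.op (Bialgebra.counitAlgHom k A))))
    fun _ y => (Algebra.commutes (Coalgebra.counit (R := k) y.unop) _).symm

variable {k A}

lemma envCounit_tmul [Bialgebra k A] (x : A) (y : Aᵐᵒᵖ) :
    envCounit k A (x ⊗ₜ y) = Coalgebra.counit (R := k) y.unop • x := by
  rw [Algebra.smul_def, Algebra.commutes]
  rfl

lemma rid_lTensor_counit_mul_one_tmul [Bialgebra k A] (z : A ⊗[k] A) (y : A) :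
    TensorProduct.rid k A (Coalgebra.counit.lTensor A (z * (1 ⊗ₜ y))) =
      Coalgebra.counit (R := k) y • TensorProduct.rid k A (Coalgebra.counit.lTensor A z) := by
  induction z with
  | zero => simp
  | add z z' hz hz' => simp only [add_mul, map_add, hz, hz', smul_add]
  | tmul a b => simp [mul_smul, smul_comm (Coalgebra.counit (R := k) b)]

lemma rid_lTensor_counit_canEnv [Bialgebra k A] (t : A ⊗[k] Aᵐᵒᵖ) :
    TensorProduct.rid k A (Coalgebra.counit.lTensor A ((regularComodAlg k A).canEnv t)) =
      envCounit k A t := by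
  induction t with
  | zero => simp
  | add t t' ht ht' => simp only [map_add, ht, ht']
  | tmul x y =>
    rw [LeftComodAlg.canEnv_tmul, rid_lTensor_counit_mul_one_tmul, envCounit_tmul]
    change _ • TensorProduct.rid k A (Coalgebra.counit.lTensor A (Coalgebra.comul x)) = _
    rw [Coalgebra.lTensor_counit_comul]
    simp

variable [HopfAlgebra k A]

lemma envCounit_comp_transl : (envCounit k A).comp
    (LeftComodAlg.transl (regularComodAlg_can_bijective k A)) = AlgHom.id k A :=
  AlgHom.ext fun a => by
    rw [AlgHom.comp_apply, ← rid_lTensor_counit_canEnv, LeftComodAlg.canEnv_transl]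
    simp

variable (k A) in
lemma cdHopf_eq_cdAlg : cdHopf k A = cdAlg k A := by
  rw [(regularComodAlg k A).cdAlg_eq_extPD_twistFunctor_obj]
  refine (extPD_leftAdjoint_obj_of_retract
    (LeftComodAlg.twistAdjunction (regularComodAlg_can_bijective k A)) (fun W => ?_) _).symm
  exact ⟨_, ⟨(restrictScalarsSectionIso _ (envCounit k A).toRingHom
    (congrArg AlgHom.toRingHom envCounit_comp_transl) W).symm.retract⟩⟩

lemma IsHomSmooth.cdHopf_ne_top (h : IsHomSmooth k A) : cdHopf k A ≠ ⊤ :=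
  (cdHopf_eq_cdAlg k A).trans_ne h.cdAlg_ne_top

end Regular

section Opposite

open MulOpposite

variable {k V W : Type*} [CommSemiring k] [AddCommMonoid V] [Module k V] [AddCommMonoid W]
  [Module k W]

variable (k V W) in
/-- The flip `v ⊗ w ↦ w ⊗ v`, from `V ⊗ W` to the tensor product of the opposites of `W`
and `V`. -/
noncomputable def opFlip : V ⊗[k] W ≃ₗ[k] Wᵐᵒᵖ ⊗[k] Vᵐᵒᵖ :=
  TensorProduct.comm k V W ≪≫ₗ TensorProduct.congr (opLinearEquiv k) (opLinearEquiv k)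

lemma opFlip_tmul (v : V) (w : W) : opFlip k V W (v ⊗ₜ w) = op w ⊗ₜ op v := rfl

/-- The left coaction `v ↦ v₍₁₎ ⊗ v₍₀₎` on opposites corresponding to a right coaction `f`. -/
noncomputable def opCoact (f : V →ₗ[k] V ⊗[k] W) : Vᵐᵒᵖ →ₗ[k] Wᵐᵒᵖ ⊗[k] Vᵐᵒᵖ :=
  (opFlip k V W).toLinearMap ∘ₗ f ∘ₗ (opLinearEquiv k).symm.toLinearMap

lemma opCoact_apply (f : V →ₗ[k] V ⊗[k] W) (x : Vᵐᵒᵖ) :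
    opCoact f x = opFlip k V W (f x.unop) := rfl

lemma assoc_rTensor_opCoact_opFlip (Δ : W →ₗ[k] W ⊗[k] W) (z : V ⊗[k] W) :
    TensorProduct.assoc k Wᵐᵒᵖ Wᵐᵒᵖ Vᵐᵒᵖ ((opCoact Δ).rTensor Vᵐᵒᵖ (opFlip k V W z)) =
      (opFlip k V W).toLinearMap.lTensor Wᵐᵒᵖ (TensorProduct.comm k (V ⊗[k] W) Wᵐᵒᵖ
        ((opLinearEquiv k).toLinearMap.lTensor (V ⊗[k] W)
          ((TensorProduct.assoc k V W W).symm (Δ.lTensor V z)))) := by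
  induction z with
  | zero => simp
  | add z z' hz hz' => simp only [map_add, hz, hz']
  | tmul v w =>
    rw [opFlip_tmul, LinearMap.rTensor_tmul, LinearMap.lTensor_tmul, opCoact_apply, unop_op]
    induction Δ w with
    | zero => simp
    | add y y' hy hy' => simp only [map_add, add_tmul, tmul_add, hy, hy']
    | tmul a b => rfl

lemma lTensor_opCoact_opFlip (f : V →ₗ[k] V ⊗[k] W) (z : V ⊗[k] W) :
    (opCoact f).lTensor Wᵐᵒᵖ (opFlip k V W z) =
      (opFlip k V W).toLinearMap.lTensor Wᵐᵒᵖ (TensorProduct.comm k (V ⊗[k] W) Wᵐᵒᵖ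
        ((opLinearEquiv k).toLinearMap.lTensor (V ⊗[k] W) (f.rTensor W z))) := by
  induction z with
  | zero => simp
  | add z z' hz hz' => simp only [map_add, hz, hz']
  | tmul v w => rfl

lemma opCoact_coassoc {f : V →ₗ[k] V ⊗[k] W} {Δ : W →ₗ[k] W ⊗[k] W}
    (h : (TensorProduct.assoc k V W W).toLinearMap ∘ₗ f.rTensor W ∘ₗ f = Δ.lTensor V ∘ₗ f) :
    (TensorProduct.assoc k Wᵐᵒᵖ Wᵐᵒᵖ Vᵐᵒᵖ).toLinearMap ∘ₗ (opCoact Δ).rTensor Vᵐᵒᵖ ∘ₗ opCoact f =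
      (opCoact f).lTensor Wᵐᵒᵖ ∘ₗ opCoact f := by
  refine LinearMap.ext fun x => (assoc_rTensor_opCoact_opFlip Δ (f x.unop)).trans ?_
  refine Eq.trans ?_ (lTensor_opCoact_opFlip f (f x.unop)).symm
  have coassoc_apply := LinearMap.congr_fun h x.unop
  simp only [LinearMap.comp_apply] at coassoc_apply
  rw [← coassoc_apply, LinearEquiv.coe_coe, LinearEquiv.symm_apply_apply]

/-- The linear functional on the opposite module given by a functional `ε`. -/
def opFunctional (ε : V →ₗ[k] k) : Vᵐᵒᵖ →ₗ[k] k := ε ∘ₗ (opLinearEquiv k).symm.toLinearMap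

lemma lid_rTensor_opFunctional_opFlip (ε : W →ₗ[k] k) (z : V ⊗[k] W) :
    TensorProduct.lid k Vᵐᵒᵖ ((opFunctional ε).rTensor Vᵐᵒᵖ (opFlip k V W z)) =
      op (TensorProduct.rid k V (ε.lTensor V z)) := by
  induction z with
  | zero => simp
  | add z z' hz hz' => simp only [map_add, MulOpposite.op_add, hz, hz']
  | tmul v w => simp [opFlip_tmul, opFunctional]

lemma rid_lTensor_opFunctional_opFlip (ε : V →ₗ[k] k) (z : V ⊗[k] W) :
    TensorProduct.rid k Wᵐᵒᵖ ((opFunctional ε).lTensor Wᵐᵒᵖ (opFlip k V W z)) =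
      op (TensorProduct.lid k W (ε.rTensor W z)) := by
  induction z with
  | zero => simp
  | add z z' hz hz' => simp only [map_add, MulOpposite.op_add, hz, hz']
  | tmul v w => simp [opFlip_tmul, opFunctional]

/-- The endomorphism of the opposite module given by an endomorphism `f`. -/
def opEnd (f : V →ₗ[k] V) : Vᵐᵒᵖ →ₗ[k] Vᵐᵒᵖ :=
  (opLinearEquiv k).toLinearMap ∘ₗ f ∘ₗ (opLinearEquiv k).symm.toLinearMap

lemma rTensor_opEnd_opFlip (f : W →ₗ[k] W) (z : V ⊗[k] W) :
    (opEnd f).rTensor Vᵐᵒᵖ (opFlip k V W z) = opFlip k V W (f.lTensor V z) :=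
  LinearMap.congr_fun (f := (opEnd f).rTensor Vᵐᵒᵖ ∘ₗ (opFlip k V W).toLinearMap)
    (g := (opFlip k V W).toLinearMap ∘ₗ f.lTensor V) (TensorProduct.ext' fun _ _ => rfl) z

lemma lTensor_opEnd_opFlip (f : V →ₗ[k] V) (z : V ⊗[k] W) :
    (opEnd f).lTensor Wᵐᵒᵖ (opFlip k V W z) = opFlip k V W (f.rTensor W z) :=
  LinearMap.congr_fun (f := (opEnd f).lTensor Wᵐᵒᵖ ∘ₗ (opFlip k V W).toLinearMap)
    (g := (opFlip k V W).toLinearMap ∘ₗ f.rTensor W) (TensorProduct.ext' fun _ _ => rfl) z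

end Opposite

section OppositeAlgebra

open MulOpposite

variable {k B C : Type*} [CommSemiring k] [Semiring B] [Algebra k B] [Semiring C] [Algebra k C]

lemma opFlip_mul (z w : B ⊗[k] C) : opFlip k B C (z * w) = opFlip k B C w * opFlip k B C z := by
  induction z with
  | zero => simp
  | add z z' hz hz' => simp only [add_mul, mul_add, map_add, hz, hz']
  | tmul b c =>
    induction w with
    | zero => simp
    | add w w' hw hw' => simp only [add_mul, mul_add, map_add, hw, hw']
    | tmul b' c' => simp [opFlip_tmul]

lemma opFlip_one : opFlip k B C 1 = 1 := rfl

lemma mul'_opFlip (z : B ⊗[k] B) :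
    LinearMap.mul' k Bᵐᵒᵖ (opFlip k B B z) = op (LinearMap.mul' k B z) := by
  induction z with
  | zero => simp
  | add z z' hz hz' => simp only [map_add, MulOpposite.op_add, hz, hz']
  | tmul b c => simp [opFlip_tmul]

end OppositeAlgebra

section OpCop

open MulOpposite

/-- The Hopf algebra `A` with opposite multiplication and opposite comultiplication. It is not
`Aᵐᵒᵖ` itself, which carries the comultiplication of `A`. -/
def OpCop (A : Type*) : Type _ := Aᵐᵒᵖ

variable {k A : Type*} [CommSemiring k] [Ring A]

instance : Ring (OpCop A) := inferInstanceAs (Ring Aᵐᵒᵖ)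

instance [Algebra k A] : Algebra k (OpCop A) := inferInstanceAs (Algebra k Aᵐᵒᵖ)

noncomputable instance [Bialgebra k A] : Coalgebra k (OpCop A) where
  comul := opCoact (Coalgebra.comul (A := A))
  counit := opFunctional (Coalgebra.counit (A := A))
  coassoc := opCoact_coassoc Coalgebra.coassoc
  rTensor_counit_comp_comul := LinearMap.ext fun x => by
    refine (TensorProduct.lid k Aᵐᵒᵖ).injective
      ((lid_rTensor_opFunctional_opFlip _ (Coalgebra.comul x.unop)).trans ?_)
    rw [Coalgebra.lTensor_counit_comul, TensorProduct.rid_tmul, one_smul]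
    exact (one_smul k x).symm
  lTensor_counit_comp_comul := LinearMap.ext fun x => by
    refine (TensorProduct.rid k Aᵐᵒᵖ).injective
      ((rid_lTensor_opFunctional_opFlip _ (Coalgebra.comul x.unop)).trans ?_)
    rw [Coalgebra.rTensor_counit_comul, TensorProduct.lid_tmul, one_smul]
    exact (one_smul k x).symm

noncomputable instance [Bialgebra k A] : Bialgebra k (OpCop A) :=
  Bialgebra.mk' k (OpCop A) (Bialgebra.counit_one (A := A))
    (fun {x y} => (Bialgebra.counit_mul (A := A) y.unop x.unop).trans (mul_comm _ _))
    ((congrArg (opFlip k A A) Bialgebra.comul_one).trans opFlip_one)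
    (fun {x y} => (congrArg (opFlip k A A) (Bialgebra.comul_mul y.unop x.unop)).trans
      (opFlip_mul _ _))

noncomputable instance [HopfAlgebra k A] : HopfAlgebra k (OpCop A) where
  antipode := opEnd (HopfAlgebra.antipode k (A := A))
  mul_antipode_rTensor_comul := LinearMap.ext fun x => by
    refine (congrArg (LinearMap.mul' k Aᵐᵒᵖ) (rTensor_opEnd_opFlip _ _)).trans ?_
    exact (mul'_opFlip _).trans (congrArg op (HopfAlgebra.mul_antipode_lTensor_comul_apply _))
  mul_antipode_lTensor_comul := LinearMap.ext fun x => by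
    refine (congrArg (LinearMap.mul' k Aᵐᵒᵖ) (lTensor_opEnd_opFlip _ _)).trans ?_
    exact (mul'_opFlip _).trans (congrArg op (HopfAlgebra.mul_antipode_rTensor_comul_apply _))

end OpCop

section EnvelopingOpposite

variable (k R : Type u) [Field k] [Ring R] [Algebra k R]

attribute [local instance] TensorProduct.Algebra.module

/-- The enveloping algebras of an algebra and of its opposite are isomorphic. -/
noncomputable def envOpEquiv : R ⊗[k] Rᵐᵒᵖ ≃ₐ[k] Rᵐᵒᵖ ⊗[k] Rᵐᵒᵖᵐᵒᵖ :=
  (Algebra.TensorProduct.comm k R Rᵐᵒᵖ).trans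
    (Algebra.TensorProduct.congr AlgEquiv.refl (AlgEquiv.opOp k R))

lemma unop_envOpEquiv_smul (t : R ⊗[k] Rᵐᵒᵖ) (r : Rᵐᵒᵖ) :
    MulOpposite.unop (envOpEquiv k R t • r) = t • MulOpposite.unop r := by
  induction t with
  | zero =>
    rw [map_zero]
    exact (congrArg MulOpposite.unop (zero_smul (Rᵐᵒᵖ ⊗[k] Rᵐᵒᵖᵐᵒᵖ) r)).trans
      (zero_smul (R ⊗[k] Rᵐᵒᵖ) r.unop).symm
  | add t t' ht ht' => rw [map_add, add_smul, add_smul, MulOpposite.unop_add, ht, ht']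
  | tmul x y => exact mul_assoc x r.unop y.unop

lemma cdAlg_mulOpposite : cdAlg k Rᵐᵒᵖ = cdAlg k R := by
  let E := ModuleCat.restrictScalarsEquivalenceOfRingEquiv.{u} (envOpEquiv k R).toRingEquiv
  have : E.functor.Additive :=
    inferInstanceAs (ModuleCat.restrictScalars.{u} (envOpEquiv k R).toRingEquiv.toRingHom).Additive
  let e : E.functor.obj (ModuleCat.of (Rᵐᵒᵖ ⊗[k] Rᵐᵒᵖᵐᵒᵖ) Rᵐᵒᵖ) ≃ₗ[R ⊗[k] Rᵐᵒᵖ] R :=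
    { (MulOpposite.opAddEquiv (α := R)).symm with map_smul' := unop_envOpEquiv_smul k R }
  exact (extPD_equivalence_functor_obj E _).symm.trans
    (extPD_eq_of_iso (Y := ModuleCat.of (R ⊗[k] Rᵐᵒᵖ) R) e.toModuleIso)

lemma cdHopf_opCop (k A : Type u) [Field k] [Ring A] [HopfAlgebra k A] :
    cdHopf k (OpCop A) = cdHopf k A :=
  (cdHopf_eq_cdAlg k (OpCop A)).trans ((cdAlg_mulOpposite k A).trans (cdHopf_eq_cdAlg k A).symm)

end EnvelopingOpposite

namespace RightComodAlg

open MulOpposite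

variable {k A R : Type u} [Field k] [Ring A] [Ring R] [Algebra k R]

section Bialgebra

variable [Bialgebra k A] (c : RightComodAlg k A R)

/-- The opposite of a right comodule algebra over `A`, as a left comodule algebra over
`OpCop A`. -/
noncomputable def opLeft : LeftComodAlg k (OpCop A) Rᵐᵒᵖ where
  lam := opCoact c.ρ
  coassoc := opCoact_coassoc c.coassoc
  counit_comp := LinearMap.ext fun x =>
    (lid_rTensor_opFunctional_opFlip _ (c.ρ x.unop)).trans
      (congrArg op (LinearMap.congr_fun c.counit_comp x.unop))
  map_one := (congrArg (opFlip k R A) c.map_one).trans opFlip_one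
  map_mul x y := (congrArg (opFlip k R A) (c.map_mul y.unop x.unop)).trans (opFlip_mul _ _)

lemma can_tmul (x y : R) : c.can (x ⊗ₜ y) = (x ⊗ₜ 1) * c.ρ y := by
  simp only [can, LinearMap.comp_apply, LinearMap.lTensor_tmul]
  induction c.ρ y with
  | zero => simp
  | add z z' hz hz' => simp only [tmul_add, _root_.map_add, hz, hz', mul_add]
  | tmul r a => simp

lemma opLeft_can_comp_opFlip :
    c.opLeft.can ∘ₗ (opFlip k R R).toLinearMap = (opFlip k R A).toLinearMap ∘ₗ c.can :=
  TensorProduct.ext' fun x y =>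
    (c.opLeft.canEnv_tmul (op y) (op (op x))).trans <|
      (opFlip_mul (x ⊗ₜ 1) (c.ρ y)).symm.trans (congrArg (opFlip k R A) (c.can_tmul x y).symm)

variable {c}

lemma IsGalois.opLeft (hc : c.IsGalois) : c.opLeft.IsGalois := by
  obtain ⟨_, hcan⟩ := hc
  refine ⟨inferInstance, (Function.Bijective.of_comp_iff _ (opFlip k R R).bijective).1 ?_⟩
  have can_comp : c.opLeft.can ∘ opFlip k R R = opFlip k R A ∘ c.can :=
    congrArg DFunLike.coe c.opLeft_can_comp_opFlip
  exact can_comp ▸ (opFlip k R A).bijective.comp hcan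

end Bialgebra

lemma IsGalois.cdHopf_eq_cdAlg [HopfAlgebra k A] {c : RightComodAlg k A R} (hc : c.IsGalois)
    (h : cdHopf k A ≠ ⊤) : cdHopf k A = cdAlg k R := by
  rw [← cdHopf_opCop, hc.opLeft.cdHopf_eq_cdAlg ((cdHopf_opCop k A).trans_ne h),
    cdAlg_mulOpposite]

end RightComodAlg

end QuesProj

open QuesProj

theorem cd_eq_cd_galois_of_smooth_general (k A R : Type u) [Field k] [Ring A] [HopfAlgebra k A]
    [Ring R] [Algebra k R] (hGalois : IsGaloisObject k A R) (hcd : cdHopf k A ≠ ⊤) :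
    cdHopf k A = cdAlg k R := by
  obtain ⟨c, hc⟩ | ⟨c, hc⟩ := hGalois
  · exact hc.cdHopf_eq_cdAlg hcd
  · exact hc.cdHopf_eq_cdAlg hcd

/-- Let `A` be a Hopf algebra over an algebraically closed field `k` with
bijective antipode, and let `R` be a left or right `A`-Galois object. If `A` is
homologically smooth, then `cd(A) = cd(R)`. -/
theorem cd_eq_cd_galois_of_smooth (k A R : Type u) [Field k] [IsAlgClosed k]
    [Ring A] [HopfAlgebra k A] [Ring R] [Algebra k R]
    (hantipode : Function.Bijective (HopfAlgebra.antipode (R := k) (A := A)))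
    (hGalois : IsGaloisObject k A R)
    (hsmooth : IsHomSmooth k A) :
    cdHopf k A = cdAlg k R :=
  cd_eq_cd_galois_of_smooth_general k A R hGalois hsmooth.cdHopf_ne_top
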